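/- Let a and b be coprime natural numbers and t a natural number such that t divides a²+1, with gcd(b,t)=1. Let a* be an integer with a·a* ≡ 1 (mod b) and b* an integer with b·b* ≡ 1 (mod a). If b ≡ 1 (mod t) or b ≡ −1 (mod t), then S(t·a*, b) + S(t·b*, a) = (a² + b² + t²)/(t·a·b) − 3. -/

import Mathlib

/-- The sawtooth function `((x))`: `x - ⌊x⌋ - 1/2` if `x ∉ ℤ`, and `0` if `x ∈ ℤ`. -/
noncomputable def saw (x : ℝ) : ℝ := if Int.fract x = 0 then 0 else x - ⌊x⌋ - 1/2

/-- The classical Dedekind sum `s(a,b) = ∑_{k=1}^b ((k/b)) ((a k / b))`. -/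
noncomputable def dedekindSum (a : ℤ) (b : ℕ) : ℝ :=
  ∑ k ∈ Finset.Icc 1 b, saw ((k : ℝ) / b) * saw ((a : ℝ) * k / b)

/-- The normalized Dedekind sum `S(a,b) = 12 s(a,b)`. -/
noncomputable def S (a : ℤ) (b : ℕ) : ℝ := 12 * dedekindSum a b

/-!
Let `s(x, y; m) = ∑ₖ ((x k / m)) ((y k / m))`. For pairwise coprime `a, b, c`, consider the
product `((n / bc)) ((n / ac)) ((n / ab))` along the half-integers `n`, over one period `abc`. Its
increments add up to zero. By the Leibniz rule they split into the contributions of the jumps,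
which give the sums `s(b, c; a)`, `s(a, c; b)`, `s(a, b; c)`, and those of the slopes, which are
elementary by the distribution relation `∑ⱼ ((x + j / n)) = ((n x))`. This is Rademacher's
three-term relation.

With `c = t`, substituting `k ↦ a k` and `k ↦ b k` identifies `s(a, t; b)` and `s(b, t; a)` with
the two sums of the theorem. The sum `s(a, b; t)` vanishes as soon as `t ∣ a² + b²`: then `a / b`
is a square root of `-1` modulo `t`, and multiplication by it changes the sign of the sum.
-/

open Finset

/-! ### Sums over `range` -/

section SumRange

variable {M : Type*} [AddCommMonoid M]

theorem sum_range_mul_eq_sum_sum (f : ℕ → M) (m k : ℕ) :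
    ∑ n ∈ range (m * k), f n = ∑ i ∈ range k, ∑ j ∈ range m, f (m * i + j) := by
  induction k with
  | zero => simp
  | succ k ih => rw [mul_add_one, sum_range_add, ih, sum_range_succ]

theorem sum_range_add_one_of_periodic {A : Type*} [AddCancelCommMonoid A] {f : ℕ → A} {n : ℕ}
    (hf : f.Periodic n) : ∑ k ∈ range n, f (k + 1) = ∑ k ∈ range n, f k :=
  add_right_cancel (b := f 0) (by rw [← sum_range_succ', sum_range_succ, hf.eq])

theorem sum_Icc_one_of_periodic {A : Type*} [AddCancelCommMonoid A] {f : ℕ → A} {n : ℕ}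
    (hf : f.Periodic n) : ∑ k ∈ Icc 1 n, f k = ∑ k ∈ range n, f k := by
  rw [← sum_range_add_one_of_periodic hf, range_eq_Ico, sum_Ico_add' f 0 n 1, zero_add,
    Ico_add_one_right_eq_Icc]

theorem sum_range_mul_of_periodic_of_coprime {f : ℕ → M} {m u : ℕ} (hf : f.Periodic m)
    (hu : u.Coprime m) :
    ∑ k ∈ range m, f (u * k) = ∑ k ∈ range m, f k := by
  have hmaps : Set.MapsTo (fun k ↦ u * k % m) (range m) (range m) := fun k hk ↦ by
    simpa using Nat.mod_lt _ (Nat.zero_lt_of_lt (by simpa using hk))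
  have hinj : Set.InjOn (fun k ↦ u * k % m) (range m) := fun x hx y hy hxy ↦
    (Nat.ModEq.cancel_left_of_coprime hu.symm hxy).eq_of_lt_of_lt
      (by simpa using hx) (by simpa using hy)
  exact sum_nbij _ hmaps hinj (surjOn_of_injOn_of_card_le _ hmaps hinj le_rfl)
    fun k _ ↦ (hf.map_mod_nat (u * k)).symm

theorem sum_range_ite_dvd (g : ℕ → M) {m : ℕ} (hm : 0 < m) (k : ℕ) :
    (∑ n ∈ range (m * k), if m ∣ n then g n else 0) = ∑ i ∈ range k, g (m * i) := by
  rw [sum_range_mul_eq_sum_sum]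
  refine sum_congr rfl fun i _ ↦ ?_
  rw [sum_eq_single_of_mem 0 (mem_range.2 hm)]
  · simp
  · intro j hj hj0
    rw [if_neg]
    rw [Nat.dvd_add_right (dvd_mul_right m i)]
    exact Nat.not_dvd_of_pos_of_lt (Nat.pos_of_ne_zero hj0) (mem_range.1 hj)

end SumRange

/-! ### The sawtooth function -/

theorem saw_eq_fract_sub_fract_neg (x : ℝ) : saw x = (Int.fract x - Int.fract (-x)) / 2 := by
  unfold saw
  split_ifs with hx
  · rw [hx, Int.fract_neg_eq_zero.2 hx, sub_zero, zero_div]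
  · rw [Int.fract_neg hx, Int.fract]
    ring

theorem saw_neg (x : ℝ) : saw (-x) = -saw x := by
  simp only [saw_eq_fract_sub_fract_neg, neg_neg]
  ring

theorem saw_add_intCast (x : ℝ) (n : ℤ) : saw (x + n) = saw x := by
  simp only [saw_eq_fract_sub_fract_neg, neg_add, ← Int.cast_neg, Int.fract_add_intCast]

theorem saw_zero : saw 0 = 0 := by
  simp [saw]

theorem saw_of_mem_Ioo {x : ℝ} (hx : x ∈ Set.Ioo 0 1) : saw x = x - 1 / 2 := by
  have hfloor : ⌊x⌋ = 0 := Int.floor_eq_zero_iff.2 ⟨hx.1.le, hx.2⟩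
  simp [saw, Int.fract, hfloor, hx.1.ne']

theorem saw_intCast_div_eq_of_modEq {m : ℕ} {x y : ℤ} (h : x ≡ y [ZMOD m]) :
    saw (x / m) = saw (y / m) := by
  rcases eq_or_ne m 0 with rfl | hm
  · simp
  · obtain ⟨q, hq⟩ := h.dvd
    have hy : (y : ℝ) / m = x / m + q := by
      rw [eq_add_of_sub_eq' hq]
      push_cast
      field_simp
    rw [hy, saw_add_intCast]

theorem periodic_saw_intCast_mul_div (x : ℤ) (m : ℕ) :
    Function.Periodic (fun k : ℕ ↦ saw (x * k / m)) m := fun k ↦ by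
  have hmod : x * (k + m : ℕ) ≡ x * k [ZMOD m] := by
    push_cast
    exact Int.add_modEq_right.mul_left x
  exact_mod_cast saw_intCast_div_eq_of_modEq hmod

theorem periodic_saw_add_natCast_div (x : ℝ) (m : ℕ) :
    Function.Periodic (fun k : ℕ ↦ saw (x + k / m)) m := fun k ↦ by
  rcases eq_or_ne m 0 with rfl | hm
  · simp
  · have hshift : x + (k + m : ℕ) / m = x + k / m + (1 : ℤ) := by
      push_cast
      field_simp
      ring
    simp only [hshift, saw_add_intCast]

theorem periodic_saw_natCast_div (m : ℕ) : Function.Periodic (fun k : ℕ ↦ saw (k / m)) m := by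
  simpa only [zero_add] using periodic_saw_add_natCast_div 0 m

theorem sum_comp_saw_div (F : ℝ → ℝ) {n : ℕ} (hn : 0 < n) :
    ∑ j ∈ range n, F (saw (j / n)) = ∑ j ∈ range n, F (j / n - 1 / 2) + (F 0 - F (-1 / 2)) := by
  have hn' : (0 : ℝ) < n := by exact_mod_cast hn
  have hsaw (j : ℕ) (hj : j ∈ range n) : F (saw (j / n)) =
      F (j / n - 1 / 2) + if j = 0 then F 0 - F (-1 / 2) else 0 := by
    split_ifs with hj0
    · simp [hj0, saw_zero, neg_div]
    · have hjn : (j : ℝ) < n := by exact_mod_cast mem_range.1 hj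
      rw [saw_of_mem_Ioo ⟨by positivity, (div_lt_one hn').2 hjn⟩, add_zero]
  rw [sum_congr rfl hsaw, sum_add_distrib, sum_ite_eq', if_pos (mem_range.2 hn)]

theorem sum_range_add_div_sub_half {n : ℕ} (hn : 0 < n) (x : ℝ) :
    ∑ j ∈ range n, (x + j / n - 1 / 2) = n * x - 1 / 2 := by
  have hsum (k : ℕ) : ∑ j ∈ range k, (x + j / n - 1 / 2) =
      k * x + k * (k - 1) / (2 * n) - k / 2 := by
    induction k with
    | zero => simp
    | succ k ih => rw [sum_range_succ, ih]; push_cast; ring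
  rw [hsum]
  field_simp
  ring

theorem sum_range_sq_div_sub_half {n : ℕ} (hn : 0 < n) :
    ∑ j ∈ range n, ((j : ℝ) / n - 1 / 2) ^ 2 = (n : ℝ) / 12 + 1 / (6 * n) := by
  have hsum (k : ℕ) : ∑ j ∈ range k, ((j : ℝ) / n - 1 / 2) ^ 2 =
      (k : ℝ) * (k - 1) * (2 * k - 1) / (6 * n ^ 2) - k * (k - 1) / (2 * n) + k / 4 := by
    induction k with
    | zero => simp
    | succ k ih => rw [sum_range_succ, ih]; push_cast; ring
  rw [hsum]
  field_simp
  ring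

theorem sum_saw_div {n : ℕ} (hn : 0 < n) : ∑ j ∈ range n, saw (j / n) = 0 := by
  have hsum := sum_range_add_div_sub_half hn 0
  simp only [zero_add, mul_zero] at hsum
  have hcomp := sum_comp_saw_div id hn
  simp only [id] at hcomp
  rw [hcomp, hsum]
  ring

theorem sum_sq_saw_div {n : ℕ} (hn : 0 < n) :
    ∑ j ∈ range n, saw (j / n) ^ 2 = (n - 1) * (n - 2) / (12 * n) := by
  rw [sum_comp_saw_div (· ^ 2) hn, sum_range_sq_div_sub_half hn]
  field_simp
  ring

theorem periodic_sum_saw_add_div (n : ℕ) :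
    Function.Periodic (fun x ↦ ∑ j ∈ range n, saw (x + j / n)) (1 / n) := fun x ↦ by
  have hstep (j : ℕ) : x + 1 / n + j / n = x + (j + 1 : ℕ) / n := by push_cast; ring
  simp only [hstep]
  exact sum_range_add_one_of_periodic (periodic_saw_add_natCast_div x n)

/-- Both sides have period `1 / n`, and on `[0, 1 / n)` the left side is an arithmetic
progression. -/
theorem sum_saw_add_div {n : ℕ} (hn : 0 < n) (x : ℝ) :
    ∑ j ∈ range n, saw (x + j / n) = saw (n * x) := by
  have hn' : (0 : ℝ) < n := by exact_mod_cast hn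
  have hperiodic : Function.Periodic (fun x : ℝ ↦ saw (n * x)) (1 / n) := fun x ↦ by
    have hmul : (n : ℝ) * (x + 1 / n) = n * x + (1 : ℤ) := by push_cast; field_simp
    simp only [hmul, saw_add_intCast]
  obtain ⟨y, ⟨hy0, hyn⟩, hxy⟩ :=
    ((periodic_sum_saw_add_div n).sub hperiodic).exists_mem_Ico₀ (by positivity) x
  refine sub_eq_zero.1 (hxy.trans (sub_eq_zero.2 ?_))
  beta_reduce
  rcases hy0.eq_or_lt with rfl | hy0
  · simp only [zero_add, mul_zero, sum_saw_div hn, saw_zero]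
  · have hny : n * y < 1 := by rwa [lt_div_iff₀' hn'] at hyn
    rw [saw_of_mem_Ioo ⟨by positivity, hny⟩, ← sum_range_add_div_sub_half hn y]
    refine sum_congr rfl fun j hj ↦ saw_of_mem_Ioo ⟨by positivity, ?_⟩
    have hjn : (j : ℝ) + 1 ≤ n := by exact_mod_cast mem_range.1 hj
    calc y + j / n < 1 / n + j / n := by gcongr
      _ = (j + 1) / n := by ring
      _ ≤ 1 := (div_le_one hn').2 hjn

theorem sum_periodic_mul_saw {f : ℕ → ℝ} {a b c : ℕ} (hf : f.Periodic (a * c)) (ha : 0 < a)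
    (hb : 0 < b) (hbc : b.Coprime c) :
    ∑ n ∈ range (a * c * b), f n * saw (n / (a * b : ℕ)) =
      ∑ r ∈ range (a * c), f r * saw (r / a) := by
  rw [sum_range_mul_eq_sum_sum, sum_comm]
  refine sum_congr rfl fun r _ ↦ ?_
  calc ∑ i ∈ range b, f (a * c * i + r) * saw ((a * c * i + r : ℕ) / (a * b : ℕ))
      = ∑ i ∈ range b, f r * saw (r / (a * b : ℕ) + (c * i : ℕ) / b) := by
        refine sum_congr rfl fun i _ ↦ ?_
        have hf_add : f (a * c * i + r) = f r := by
          rw [add_comm, mul_comm]; exact hf.nat_mul i r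
        rw [hf_add]
        congr 2
        push_cast; field_simp; ring
    _ = f r * ∑ i ∈ range b, saw (r / (a * b : ℕ) + i / b) := by
        rw [← mul_sum, sum_range_mul_of_periodic_of_coprime
          (periodic_saw_add_natCast_div _ b) hbc.symm]
    _ = f r * saw (r / a) := by
        rw [sum_saw_add_div hb]
        congr 2
        push_cast; field_simp

theorem sum_saw_mul_saw {a b c : ℕ} (ha : 0 < a) (hb : 0 < b) (hc : 0 < c) (hbc : b.Coprime c) :
    ∑ n ∈ range (a * b * c), saw (n / (a * c : ℕ)) * saw (n / (a * b : ℕ)) =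
      (a - 1) * (a - 2) / (12 * a) := by
  have hfirst := sum_periodic_mul_saw (periodic_saw_natCast_div (a * c)) ha hb hbc
  have hsecond : ∑ r ∈ range (a * c), saw (r / a) * saw (r / (a * c : ℕ)) =
      ∑ r ∈ range a, saw (r / a) * saw (r / a) := by
    have hperiodic : Function.Periodic (fun r : ℕ ↦ saw (r / a)) (a * 1) := by
      simpa only [mul_one] using periodic_saw_natCast_div a
    simpa only [mul_one] using sum_periodic_mul_saw hperiodic ha hc (Nat.coprime_one_right c)
  rw [mul_right_comm, hfirst, ← sum_sq_saw_div ha]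
  simp only [pow_two, ← hsecond, mul_comm]

/-! ### Increments of the sawtooth function -/

/-- The increment `saw ((n + 1/2) / m) - saw ((n - 1/2) / m)` of the sawtooth function across
`n / m`: the slope contributes `1 / m`, and every multiple of `m` is a jump by `-1`. -/
noncomputable def sawIncrement (m : ℕ) (n : ℤ) : ℝ := 1 / m - if (m : ℤ) ∣ n then 1 else 0

theorem sawIncrement_neg (m : ℕ) (n : ℤ) : sawIncrement m (-n) = sawIncrement m n := by
  simp only [sawIncrement, dvd_neg]

theorem saw_add_half_div {m : ℕ} (hm : 0 < m) (n : ℤ) :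
    saw ((n + 1 / 2) / m) = saw (n / m) + sawIncrement m n / 2 := by
  have hm' : (0 : ℝ) < m := by exact_mod_cast hm
  have hr0 : 0 ≤ n % m := Int.emod_nonneg n (by lia)
  have hrm : n % m + 1 ≤ m := Int.emod_lt_of_pos n (by lia)
  have hrm' : ((n % m : ℤ) : ℝ) + 1 ≤ m := by exact_mod_cast hrm
  have hn : (n : ℝ) = (n % m : ℤ) + m * (n / m : ℤ) := by
    exact_mod_cast (Int.emod_add_mul_ediv n m).symm
  have hshift : ((n : ℝ) + 1 / 2) / m = ((n % m : ℤ) + 1 / 2) / m + (n / m : ℤ) := by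
    conv_lhs => rw [hn]
    field_simp
    ring
  rw [hshift, saw_add_intCast, saw_of_mem_Ioo ⟨by positivity, by rw [div_lt_one hm']; linarith⟩,
    saw_intCast_div_eq_of_modEq (Int.mod_modEq n m).symm]
  by_cases hdvd : (m : ℤ) ∣ n
  · rw [sawIncrement, if_pos hdvd, Int.emod_eq_zero_of_dvd hdvd, Int.cast_zero, zero_div, saw_zero]
    ring
  · have hpos : (0 : ℝ) < (n % m : ℤ) := by
      exact_mod_cast hr0.lt_of_ne' (mt Int.dvd_of_emod_eq_zero hdvd)
    rw [saw_of_mem_Ioo ⟨by positivity, by rw [div_lt_one hm']; linarith⟩,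
      sawIncrement, if_neg hdvd]
    ring

theorem saw_sub_half_div {m : ℕ} (hm : 0 < m) (n : ℤ) :
    saw ((n - 1 / 2) / m) = saw (n / m) - sawIncrement m n / 2 := by
  have hreflect := saw_add_half_div hm (-n)
  have hneg : ((n : ℝ) - 1 / 2) / m = -(((-n : ℤ) + 1 / 2) / m) := by push_cast; ring
  rw [hneg, saw_neg, hreflect, sawIncrement_neg, Int.cast_neg, neg_div, saw_neg]
  ring

/-- The discrete Leibniz rule, summed over a period: the summand is the increment of the product
of the three sawtooth functions from `n - 1/2` to `n + 1/2`. -/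
theorem sum_sawIncrement_leibniz {p q r N : ℕ} (hp : 0 < p) (hq : 0 < q) (hr : 0 < r)
    (hpN : p ∣ N) (hqN : q ∣ N) (hrN : r ∣ N) :
    ∑ n ∈ range N, (sawIncrement p n * (saw (n / q) * saw (n / r)) +
      sawIncrement q n * (saw (n / p) * saw (n / r)) +
      sawIncrement r n * (saw (n / p) * saw (n / q)) +
      sawIncrement p n * (sawIncrement q n * sawIncrement r n) / 4) = 0 := by
  let F (n : ℕ) : ℝ := saw ((n - 1 / 2) / p) * saw ((n - 1 / 2) / q) * saw ((n - 1 / 2) / r)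
  have hwrap {m : ℕ} (hm : 0 < m) (hmN : m ∣ N) :
      saw (((N : ℕ) - 1 / 2) / m) = saw (((0 : ℕ) - 1 / 2) / m) := by
    obtain ⟨k, rfl⟩ := hmN
    have hshift : (((m * k : ℕ) : ℝ) - 1 / 2) / m = ((0 : ℕ) - 1 / 2) / m + (k : ℤ) := by
      push_cast; field_simp; ring
    rw [hshift, saw_add_intCast]
  have hF : F N = F 0 := by simp only [F, hwrap hp hpN, hwrap hq hqN, hwrap hr hrN]
  rw [← sub_eq_zero.2 hF, ← sum_range_sub F]
  refine sum_congr rfl fun n _ ↦ ?_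
  have hright {m : ℕ} (hm : 0 < m) :
      saw (((n + 1 : ℕ) - 1 / 2) / m) = saw (n / m) + sawIncrement m n / 2 := by
    have hsucc : ((n + 1 : ℕ) : ℝ) - 1 / 2 = (n : ℤ) + 1 / 2 := by push_cast; ring
    rw [hsucc, saw_add_half_div hm, Int.cast_natCast]
  have hleft {m : ℕ} (hm : 0 < m) :
      saw ((n - 1 / 2) / m) = saw (n / m) - sawIncrement m n / 2 := by
    simpa only [Int.cast_natCast] using saw_sub_half_div hm n
  simp only [F, hright hp, hright hq, hright hr, hleft hp, hleft hq, hleft hr]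
  ring

theorem sum_sawIncrement_mul (g : ℕ → ℝ) {m : ℕ} (hm : 0 < m) (k : ℕ) :
    ∑ n ∈ range (m * k), sawIncrement m n * g n =
      1 / m * ∑ n ∈ range (m * k), g n - ∑ i ∈ range k, g (m * i) := by
  simp only [sawIncrement, sub_mul, sum_sub_distrib, mul_sum, ite_mul, one_mul, zero_mul,
    Int.natCast_dvd_natCast, sum_range_ite_dvd g hm]

theorem sum_sawIncrement {m : ℕ} (hm : 0 < m) (k : ℕ) :
    ∑ n ∈ range (m * k), sawIncrement m n = 0 := by
  have hsum := sum_sawIncrement_mul 1 hm k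
  simp only [Pi.one_apply, mul_one, sum_const, card_range, nsmul_eq_mul] at hsum
  rw [hsum]
  push_cast
  field_simp
  ring

theorem sawIncrement_mul_mul_of_coprime {a b c k : ℕ} (ha : 0 < a) (hbc : b.Coprime c)
    (hk : k < b) :
    sawIncrement (a * b) (a * c * k : ℕ) = 1 / (a * b) - if k = 0 then 1 else 0 := by
  have hdvd : a * b ∣ a * c * k ↔ k = 0 := by
    rw [mul_assoc, Nat.mul_dvd_mul_iff_left ha, hbc.dvd_mul_left]
    exact ⟨fun h ↦ Nat.eq_zero_of_dvd_of_lt h hk, fun h ↦ h ▸ dvd_zero b⟩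
  simp only [sawIncrement, Int.natCast_dvd_natCast, hdvd]
  rw [Nat.cast_mul]

theorem sum_sawIncrement_mul_sawIncrement {a b c : ℕ} (ha : 0 < a) (hb : 0 < b) (hc : 0 < c)
    (hbc : b.Coprime c) :
    ∑ n ∈ range (a * b * c), sawIncrement (a * c) n * sawIncrement (a * b) n = 1 - 1 / a := by
  have hjumps : ∑ k ∈ range b, sawIncrement (a * b) (a * c * k : ℕ) = 1 / a - 1 := by
    rw [sum_congr rfl fun k hk ↦ sawIncrement_mul_mul_of_coprime ha hbc (mem_range.1 hk),
      sum_sub_distrib, sum_ite_eq', if_pos (mem_range.2 hb), sum_const, card_range, nsmul_eq_mul]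
    field_simp
  rw [mul_right_comm, sum_sawIncrement_mul (fun n ↦ sawIncrement (a * b) n) (by positivity),
    mul_right_comm, sum_sawIncrement (by positivity), hjumps]
  ring

theorem sum_sawIncrement_triple {a b c : ℕ} (ha : 0 < a) (hb : 0 < b) (hc : 0 < c)
    (hab : a.Coprime b) (hac : a.Coprime c) (hbc : b.Coprime c) :
    ∑ n ∈ range (a * b * c),
      sawIncrement (b * c) n * (sawIncrement (a * c) n * sawIncrement (a * b) n) =
      1 / (b * c) + 1 / (a * c) + 1 / (a * b) - 2 / (a * b * c) - 1 := by
  have hjumps : ∑ k ∈ range a,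
      sawIncrement (a * c) (b * c * k : ℕ) * sawIncrement (a * b) (b * c * k : ℕ) =
      1 / (a * b * c) - 1 / (a * c) - 1 / (a * b) + 1 := by
    have hterm (k : ℕ) (hk : k ∈ range a) :
        sawIncrement (a * c) (b * c * k : ℕ) * sawIncrement (a * b) (b * c * k : ℕ) =
        1 / (a * b * (a * c)) + if k = 0 then 1 - 1 / (a * c) - 1 / (a * b : ℝ) else 0 := by
      have hb' := sawIncrement_mul_mul_of_coprime hb hac (mem_range.1 hk)
      have hc' := sawIncrement_mul_mul_of_coprime hc hab (mem_range.1 hk)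
      rw [mul_comm b a] at hb'
      rw [mul_comm c a, mul_comm c b] at hc'
      rw [hb', hc']
      split_ifs <;> (field_simp; ring)
    rw [sum_congr rfl hterm, sum_add_distrib, sum_ite_eq', if_pos (mem_range.2 ha), sum_const,
      card_range, nsmul_eq_mul]
    field_simp
    ring
  have hperiod : a * b * c = b * c * a := by ring
  rw [hperiod, sum_sawIncrement_mul (fun n ↦ sawIncrement (a * c) n * sawIncrement (a * b) n)
    (by positivity), hjumps, ← hperiod, sum_sawIncrement_mul_sawIncrement ha hb hc hbc]
  push_cast
  field_simp
  ring

/-! ### Homogeneous Dedekind sums -/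

/-- Rademacher's homogeneous Dedekind sum `s(x, y; m)`, with `s(1, y; m) = s(y, m)`. The term at
`k = 0` vanishes. -/
noncomputable def homogeneousDedekindSum (x y : ℤ) (m : ℕ) : ℝ :=
  ∑ k ∈ range m, saw (x * k / m) * saw (y * k / m)

theorem homogeneousDedekindSum_comm (x y : ℤ) (m : ℕ) :
    homogeneousDedekindSum x y m = homogeneousDedekindSum y x m := by
  simp only [homogeneousDedekindSum, mul_comm]

theorem homogeneousDedekindSum_neg_left (x y : ℤ) (m : ℕ) :
    homogeneousDedekindSum (-x) y m = -homogeneousDedekindSum x y m := by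
  simp only [homogeneousDedekindSum, Int.cast_neg, neg_mul, neg_div, saw_neg, sum_neg_distrib]

theorem homogeneousDedekindSum_congr {m : ℕ} {x x' y y' : ℤ} (hx : x ≡ x' [ZMOD m])
    (hy : y ≡ y' [ZMOD m]) :
    homogeneousDedekindSum x y m = homogeneousDedekindSum x' y' m := by
  have hsaw {z z' : ℤ} (hz : z ≡ z' [ZMOD m]) (k : ℕ) : saw (z * k / m) = saw (z' * k / m) :=
    mod_cast saw_intCast_div_eq_of_modEq (hz.mul_right k)
  simp only [homogeneousDedekindSum, hsaw hx, hsaw hy]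

theorem homogeneousDedekindSum_summand_periodic (x y : ℤ) (m : ℕ) :
    Function.Periodic (fun k : ℕ ↦ saw (x * k / m) * saw (y * k / m)) m :=
  (periodic_saw_intCast_mul_div x m).mul (periodic_saw_intCast_mul_div y m)

theorem homogeneousDedekindSum_mul_mul_of_coprime {u m : ℕ} (hu : u.Coprime m) (x y : ℤ) :
    homogeneousDedekindSum (x * u) (y * u) m = homogeneousDedekindSum x y m := by
  rw [homogeneousDedekindSum, homogeneousDedekindSum,
    ← sum_range_mul_of_periodic_of_coprime (homogeneousDedekindSum_summand_periodic x y m) hu]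
  push_cast
  simp only [mul_assoc]

theorem S_eq_homogeneousDedekindSum (x : ℤ) (m : ℕ) :
    S x m = 12 * homogeneousDedekindSum 1 x m := by
  have hsum := sum_Icc_one_of_periodic (homogeneousDedekindSum_summand_periodic 1 x m)
  simp only [Int.cast_one, one_mul] at hsum
  simp only [S, dedekindSum, homogeneousDedekindSum, hsum, Int.cast_one, one_mul]

theorem S_mul_inverse_eq_homogeneousDedekindSum {u m : ℕ} {z : ℤ} (hz : u * z ≡ 1 [ZMOD m])
    (y : ℤ) : S (y * z) m = 12 * homogeneousDedekindSum u y m := by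
  have hu : u.Coprime m := by
    obtain ⟨q, hq⟩ := hz.dvd
    exact Nat.isCoprime_iff_coprime.1 ⟨z, q, by linear_combination -hq⟩
  have hy : y * z * u ≡ y [ZMOD m] := by
    simpa only [mul_one, mul_assoc, mul_comm z] using hz.mul_left y
  rw [S_eq_homogeneousDedekindSum, ← homogeneousDedekindSum_mul_mul_of_coprime hu, one_mul,
    homogeneousDedekindSum_congr rfl hy]

/-- Multiplying both arguments by `x` turns `(x, y)` into `(-y², xy)`, so the sum equals its own
negative. -/
theorem homogeneousDedekindSum_eq_zero_of_dvd_sq_add_sq {x y m : ℕ} (hx : x.Coprime m)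
    (hy : y.Coprime m) (h : m ∣ x ^ 2 + y ^ 2) : homogeneousDedekindSum x y m = 0 := by
  have hsq : (x : ℤ) * x ≡ -(y : ℤ) * y [ZMOD m] := by
    refine (Int.modEq_iff_dvd.2 ?_).symm
    have hdvd : (m : ℤ) ∣ x ^ 2 + y ^ 2 := by exact_mod_cast h
    simpa only [sub_neg_eq_add, neg_mul, ← pow_two] using hdvd
  have hself : homogeneousDedekindSum x y m = -homogeneousDedekindSum x y m :=
    calc homogeneousDedekindSum x y m
      _ = homogeneousDedekindSum (x * x) (y * x) m :=
        (homogeneousDedekindSum_mul_mul_of_coprime hx x y).symm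
      _ = homogeneousDedekindSum (-y * y) (x * y) m :=
        homogeneousDedekindSum_congr hsq (by rw [mul_comm])
      _ = -homogeneousDedekindSum x y m := by
        rw [homogeneousDedekindSum_mul_mul_of_coprime hy, homogeneousDedekindSum_neg_left,
          homogeneousDedekindSum_comm]
  linarith

/-! ### The three-term relation -/

theorem sum_sawIncrement_mul_saw_mul_saw {a b c : ℕ} (ha : 0 < a) (hb : 0 < b) (hc : 0 < c)
    (hbc : b.Coprime c) :
    ∑ n ∈ range (a * b * c),
      sawIncrement (b * c) n * (saw (n / (a * c : ℕ)) * saw (n / (a * b : ℕ))) =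
      (a - 1) * (a - 2) / (12 * (a * b * c)) - homogeneousDedekindSum b c a := by
  have hjumps : ∑ k ∈ range a,
      saw ((b * c * k : ℕ) / (a * c : ℕ)) * saw ((b * c * k : ℕ) / (a * b : ℕ)) =
      homogeneousDedekindSum b c a := by
    refine sum_congr rfl fun k _ ↦ ?_
    congr 2 <;> (push_cast; field_simp)
  have hperiod : a * b * c = b * c * a := by ring
  rw [hperiod, sum_sawIncrement_mul (fun n ↦ saw (n / (a * c : ℕ)) * saw (n / (a * b : ℕ)))
    (by positivity), hjumps, ← hperiod, sum_saw_mul_saw ha hb hc hbc]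
  push_cast
  field_simp

theorem homogeneousDedekindSum_three_term {a b c : ℕ} (ha : 0 < a) (hb : 0 < b) (hc : 0 < c)
    (hab : a.Coprime b) (hac : a.Coprime c) (hbc : b.Coprime c) :
    homogeneousDedekindSum b c a + homogeneousDedekindSum a c b + homogeneousDedekindSum a b c =
      (a ^ 2 + b ^ 2 + c ^ 2) / (12 * (a * b * c)) - 1 / 4 := by
  have hleibniz := sum_sawIncrement_leibniz (p := b * c) (q := a * c) (r := a * b) (N := a * b * c)
    (by positivity) (by positivity) (by positivity)
    ⟨a, by ring⟩ ⟨b, by ring⟩ ⟨c, by ring⟩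
  have hsum_a := sum_sawIncrement_mul_saw_mul_saw ha hb hc hbc
  have hsum_b := sum_sawIncrement_mul_saw_mul_saw hb ha hc hac
  have hsum_c := sum_sawIncrement_mul_saw_mul_saw hc ha hb hab
  rw [mul_comm b a] at hsum_b
  rw [mul_assoc, mul_comm c (a * b), mul_comm c b, mul_comm c a] at hsum_c
  rw [sum_add_distrib, sum_add_distrib, sum_add_distrib, ← sum_div, hsum_a, hsum_b, hsum_c,
    sum_sawIncrement_triple ha hb hc hab hac hbc] at hleibniz
  rw [← sub_eq_zero, ← neg_eq_zero, ← hleibniz]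
  field_simp
  ring

theorem coprime_of_dvd_sq_add_sq {a b t : ℕ} (hab : a.Coprime b) (h : t ∣ a ^ 2 + b ^ 2) :
    a.Coprime t := by
  refine Nat.Coprime.coprime_dvd_right h ?_
  rw [pow_two, Nat.coprime_mul_left_add_right]
  exact hab.pow_right 2

theorem stmt_3_general {a b t : ℕ} (ha : 0 < a) (hb : 0 < b) (hab : a.Coprime b)
    (ht : t ∣ a ^ 2 + b ^ 2) {astar bstar : ℤ} (hastar : a * astar ≡ 1 [ZMOD b])
    (hbstar : b * bstar ≡ 1 [ZMOD a]) :
    S (t * astar) b + S (t * bstar) a =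
      ((a : ℝ) ^ 2 + (b : ℝ) ^ 2 + (t : ℝ) ^ 2) / ((t : ℝ) * a * b) - 3 := by
  have htpos : 0 < t := Nat.pos_of_dvd_of_pos ht (by positivity)
  have hat : a.Coprime t := coprime_of_dvd_sq_add_sq hab ht
  have hbt : b.Coprime t := coprime_of_dvd_sq_add_sq hab.symm (add_comm (a ^ 2) _ ▸ ht)
  have hthree := homogeneousDedekindSum_three_term ha hb htpos hab hat hbt
  rw [homogeneousDedekindSum_eq_zero_of_dvd_sq_add_sq hat hbt ht, add_zero] at hthree
  rw [S_mul_inverse_eq_homogeneousDedekindSum hastar,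
    S_mul_inverse_eq_homogeneousDedekindSum hbstar, ← mul_add, add_comm, hthree]
  field_simp
  ring

theorem dvd_sq_add_sq_of_modEq_one_or_neg_one {a b t : ℕ} (ha : t ∣ a ^ 2 + 1)
    (hb : (b : ℤ) ≡ 1 [ZMOD t] ∨ (b : ℤ) ≡ -1 [ZMOD t]) : t ∣ a ^ 2 + b ^ 2 := by
  have hb_sq : (b : ℤ) ^ 2 ≡ 1 [ZMOD t] := by
    rcases hb with hb | hb <;> simpa using hb.pow 2
  have hb_sq' : b ^ 2 ≡ 1 [MOD t] := by exact_mod_cast hb_sq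
  exact ((hb_sq'.add_left (a ^ 2)).dvd_iff dvd_rfl).2 ha

theorem stmt_3 (a b t : ℕ) (ha : 0 < a) (hb : 0 < b) (ht : 0 < t)
    (hab : Nat.Coprime a b) (htdvd : t ∣ a ^ 2 + 1) (hbt : Nat.Coprime b t)
    (astar bstar : ℤ)
    (hastar : (a : ℤ) * astar ≡ 1 [ZMOD (b : ℤ)])
    (hbstar : (b : ℤ) * bstar ≡ 1 [ZMOD (a : ℤ)])
    (hbmod : (b : ℤ) ≡ 1 [ZMOD (t : ℤ)] ∨ (b : ℤ) ≡ -1 [ZMOD (t : ℤ)]) :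
    S ((t : ℤ) * astar) b + S ((t : ℤ) * bstar) a =
      ((a : ℝ) ^ 2 + (b : ℝ) ^ 2 + (t : ℝ) ^ 2) / ((t : ℝ) * a * b) - 3 := by
  exact stmt_3_general ha hb hab (dvd_sq_add_sq_of_modEq_one_or_neg_one htdvd hbmod) hastar hbstar
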